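/- Assume ‖θ‖_T > 0, 0 < ζ < 1 − exp(−|q_α|‖θ‖_T + ‖θ‖_T²/2), and |q_α| ≥ 2(T+1)‖θ‖_T. Let γ be a maximizer of Γ over [0,ζ] and ν* = (ỹ^γ, v^γ). Then ν* ∈ U, ν* satisfies the VaR constraint at level ζ, J(x,ν*) = A(x) + Γ(γ), and J(x,ν) ≤ A(x) + Γ(γ) for every ν ∈ U satisfying the VaR constraint at level ζ. -/

import Mathlib

open MeasureTheory Real Set Filter
open scoped RealInnerProductSpace ENNReal

noncomputable section

abbrev E (d : ℕ) := EuclideanSpace ℝ (Fin d)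

/-- ω(t) = T − t + 1 -/
def om (T t : ℝ) : ℝ := T - t + 1

/-- running L²-norm ‖y‖_t = (∫₀^t |y_s|² ds)^{1/2} -/
def nrm {d : ℕ} (y : ℝ → E d) (t : ℝ) : ℝ :=
  Real.sqrt (∫ s in Set.Ioc (0:ℝ) t, ‖y s‖ ^ 2)

/-- running inner product (y,θ)_t = ∫₀^t y_s'θ_s ds -/
def ipr {d : ℕ} (y θ : ℝ → E d) (t : ℝ) : ℝ :=
  ∫ s in Set.Ioc (0:ℝ) t, ⟪y s, θ s⟫

/-- membership in L²([0,T];ℝ^d) -/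
def L2fun {d : ℕ} (T : ℝ) (y : ℝ → E d) : Prop :=
  Measurable y ∧ IntegrableOn (fun t => ‖y t‖ ^ 2) (Set.Ioc 0 T)

def k1 {d : ℕ} (T : ℝ) (θ : ℝ → E d) : ℝ :=
  ∫ t in Set.Ioc (0:ℝ) T, om T t * ‖θ t‖ ^ 2

def k2 {d : ℕ} (T : ℝ) (θ : ℝ → E d) : ℝ :=
  ∫ t in Set.Ioc (0:ℝ) T, om T t ^ 2 * ‖θ t‖ ^ 2

/-- G(u,λ) -/
def Gfun {d : ℕ} (T : ℝ) (θ : ℝ → E d) (qa u lam : ℝ) : ℝ :=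
  ∫ t in Set.Ioc (0:ℝ) T,
    (om T t + lam) ^ 2 * ‖θ t‖ ^ 2 / (lam * |qa| + u * (om T t + lam)) ^ 2

open Classical in
/-- ρ(λ) = inf{u ≥ 0 : G(u,λ) ≤ 1}, with value +∞ if no such u exists -/
def rho {d : ℕ} (T : ℝ) (θ : ℝ → E d) (qa lam : ℝ) : ℝ≥0∞ :=
  if {u : ℝ | 0 ≤ u ∧ Gfun T θ qa u lam ≤ 1}.Nonempty then
    ENNReal.ofReal (sInf {u : ℝ | 0 ≤ u ∧ Gfun T θ qa u lam ≤ 1})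
  else ⊤

open Classical in
/-- τ_λ(t), with τ_λ ≡ 1 if ρ(λ) = +∞ -/
def tau {d : ℕ} (T : ℝ) (θ : ℝ → E d) (qa lam t : ℝ) : ℝ :=
  if rho T θ qa lam = ⊤ then 1
  else (rho T θ qa lam).toReal * (om T t + lam) /
    (lam * |qa| + (rho T θ qa lam).toReal * (om T t + lam))

def lamMax {d : ℕ} (T : ℝ) (θ : ℝ → E d) (qa : ℝ) : ℝ :=
  (k1 T θ + Real.sqrt (k2 T θ * (qa ^ 2 - nrm θ T ^ 2) + k1 T θ ^ 2)) /
    (qa ^ 2 - nrm θ T ^ 2)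

/-- Φ(λ) = |q_α|‖τ_λθ‖_T + ½‖τ_λθ‖_T² − ∫₀^T τ_λ(t)|θ_t|² dt -/
def Phi {d : ℕ} (T : ℝ) (θ : ℝ → E d) (qa lam : ℝ) : ℝ :=
  |qa| * nrm (fun t => tau T θ qa lam t • θ t) T
    + nrm (fun t => tau T θ qa lam t • θ t) T ^ 2 / 2
    - ∫ t in Set.Ioc (0:ℝ) T, tau T θ qa lam t * ‖θ t‖ ^ 2

/-- cumulated consumption V_t = ∫₀^t v_s ds -/
def Vtot (v : ℝ → ℝ) (t : ℝ) : ℝ := ∫ s in Set.Ioc (0:ℝ) t, v s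

/-- the set U of admissible deterministic strategies -/
def Admiss {d : ℕ} (T : ℝ) (y : ℝ → E d) (v : ℝ → ℝ) : Prop :=
  Measurable y ∧ IntegrableOn (fun t => ‖y t‖ ^ 2) (Set.Ioc 0 T) ∧
    Measurable v ∧ (∀ t ∈ Set.Icc (0:ℝ) T, 0 < v t) ∧
    IntegrableOn v (Set.Ioc 0 T) ∧
    IntegrableOn (fun t => max (-Real.log (v t)) 0) (Set.Ioc 0 T)

/-- the cost J(x,ν) -/
def Jcost {d : ℕ} (T x : ℝ) (r : ℝ → ℝ) (θ y : ℝ → E d) (v : ℝ → ℝ) : ℝ :=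
  (T + 1) * Real.log x
    + (∫ t in Set.Ioc (0:ℝ) T, om T t * (r t + ⟪y t, θ t⟫ - ‖y t‖ ^ 2 / 2))
    + (∫ t in Set.Ioc (0:ℝ) T, (Real.log (v t) - Vtot v t))
    - Vtot v T

/-- A(x) = (T+1)ln x + ∫₀^T ω(t)r_t dt − T ln T -/
def Aconst (T x : ℝ) (r : ℝ → ℝ) : ℝ :=
  (T + 1) * Real.log x + (∫ t in Set.Ioc (0:ℝ) T, om T t * r t) - T * Real.log T

/-- v^κ_t = κ/(T − tκ) -/
def vk (T k t : ℝ) : ℝ := k / (T - t * k)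

/-- the VaR constraint at level ζ -/
def VaROK {d : ℕ} (T : ℝ) (θ y : ℝ → E d) (v : ℝ → ℝ) (qa z : ℝ) : Prop :=
  ∀ t ∈ Set.Icc (0:ℝ) T,
    Real.log (1 - z) ≤ ipr y θ t - nrm y t ^ 2 / 2 - Vtot v t - |qa| * nrm y t

/-- Γ(κ), where φ(κ) = Φ⁻¹(ln((1−κ)/(1−ζ))) -/
def Gam {d : ℕ} (T : ℝ) (θ : ℝ → E d) (qa z : ℝ) (Finv : ℝ → ℝ) (k : ℝ) : ℝ :=
  Real.log (1 - k) + T * Real.log k +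
    ∫ t in Set.Ioc (0:ℝ) T, om T t * ‖θ t‖ ^ 2 *
      (tau T θ qa (Finv (Real.log ((1 - k) / (1 - z)))) t
        - tau T θ qa (Finv (Real.log ((1 - k) / (1 - z)))) t ^ 2 / 2)

/-- the candidate optimal VaR investment strategy ỹ^κ -/
def ystarV {d : ℕ} (T : ℝ) (θ : ℝ → E d) (qa z : ℝ) (Finv : ℝ → ℝ) (k : ℝ) : ℝ → E d :=
  fun t => tau T θ qa (Finv (Real.log ((1 - k) / (1 - z)))) t • θ t

lemma integrableOn_bdd_mul {T C : ℝ} {g f : ℝ → ℝ} (hg : Measurable g)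
    (hC : ∀ t ∈ Ioc (0 : ℝ) T, |g t| ≤ C) (hf : IntegrableOn f (Ioc 0 T)) :
    IntegrableOn (fun t => g t * f t) (Ioc 0 T) := by
  refine Integrable.mono' (hf.norm.const_mul C)
    (hg.aestronglyMeasurable.mul hf.aestronglyMeasurable) ?_
  refine ae_restrict_of_forall_mem measurableSet_Ioc fun t ht => ?_
  rw [norm_mul]
  exact mul_le_mul_of_nonneg_right (hC t ht) (norm_nonneg _)

lemma measurable_om (T : ℝ) : Measurable (om T) := by
  unfold om; fun_prop

lemma abs_om_le {T t : ℝ} (ht : t ∈ Ioc (0 : ℝ) T) : |om T t| ≤ T + 1 := by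
  unfold om
  rw [abs_of_nonneg] <;> linarith [ht.1, ht.2]

lemma integrableOn_inner {d : ℕ} {T : ℝ} {y θ : ℝ → E d} (hy : L2fun T y) (hθ : L2fun T θ) :
    IntegrableOn (fun t => ⟪y t, θ t⟫) (Ioc 0 T) := by
  refine Integrable.mono' (hy.2.add hθ.2) (hy.1.inner hθ.1).aestronglyMeasurable ?_
  refine Eventually.of_forall fun t => ?_
  have h1 := abs_real_inner_le_norm (y t) (θ t)
  simp only [Real.norm_eq_abs, Pi.add_apply]
  nlinarith [sq_nonneg (‖y t‖ - ‖θ t‖), sq_nonneg (‖y t‖), sq_nonneg (‖θ t‖)]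

lemma nrm_sq {d : ℕ} (y : ℝ → E d) (t : ℝ) :
    nrm y t ^ 2 = ∫ s in Ioc (0 : ℝ) t, ‖y s‖ ^ 2 :=
  Real.sq_sqrt (integral_nonneg fun _ => sq_nonneg _)

lemma nrm_nonneg {d : ℕ} (y : ℝ → E d) (t : ℝ) : 0 ≤ nrm y t := Real.sqrt_nonneg _

lemma ipr_le_nrm_mul_nrm {d : ℕ} {T : ℝ} {y θ : ℝ → E d} (hy : L2fun T y) (hθ : L2fun T θ) :
    ipr y θ T ≤ nrm y T * nrm θ T := by
  have key : ∀ c : ℝ, 0 ≤ nrm θ T ^ 2 * (c * c) + (-2 * ipr y θ T) * c + nrm y T ^ 2 := by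
    intro c
    have h1 : nrm θ T ^ 2 * (c * c) + (-2 * ipr y θ T) * c + nrm y T ^ 2
        = ∫ s in Ioc (0 : ℝ) T,
          ((c * c) * ‖θ s‖ ^ 2 + (-2 * c) * ⟪y s, θ s⟫ + ‖y s‖ ^ 2) := by
      have h2 : IntegrableOn (fun s => (c * c) * ‖θ s‖ ^ 2 + (-2 * c) * ⟪y s, θ s⟫) (Ioc 0 T) :=
        (hθ.2.const_mul _).add ((integrableOn_inner hy hθ).const_mul _)
      rw [integral_add h2 hy.2,
        integral_add (hθ.2.const_mul _) ((integrableOn_inner hy hθ).const_mul _),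
        integral_const_mul, integral_const_mul, nrm_sq, nrm_sq, ipr]
      ring
    rw [h1]
    refine integral_nonneg fun s => ?_
    have h2 := norm_sub_sq_real (y s) (c • θ s)
    rw [real_inner_smul_right, norm_smul, mul_pow, Real.norm_eq_abs, sq_abs] at h2
    simp only [Pi.zero_apply]
    nlinarith [sq_nonneg ‖y s - c • θ s‖]
  have h := discrim_le_zero key
  unfold discrim at h
  refine le_of_sq_le_sq ?_ (mul_nonneg (nrm_nonneg _ _) (nrm_nonneg _ _))
  nlinarith

lemma setIntegral_primitive {T : ℝ} {f : ℝ → ℝ} (hf : IntegrableOn f (Ioc 0 T)) :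
    ∫ t in Ioc (0 : ℝ) T, Vtot f t = ∫ s in Ioc (0 : ℝ) T, (T - s) * f s := by
  have hint : Integrable (fun p : ℝ × ℝ => {p : ℝ × ℝ | p.2 ≤ p.1}.indicator (fun p => f p.2) p)
      ((volume.restrict (Ioc (0 : ℝ) T)).prod (volume.restrict (Ioc (0 : ℝ) T))) :=
    (Integrable.comp_snd hf _).indicator (measurableSet_le measurable_snd measurable_fst)
  have hswap := integral_integral_swap
    (f := fun t s => {p : ℝ × ℝ | p.2 ≤ p.1}.indicator (fun p => f p.2) (t, s)) hint
  have hl : ∫ t in Ioc (0 : ℝ) T, Vtot f t = ∫ t in Ioc (0 : ℝ) T, ∫ s in Ioc (0 : ℝ) T,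
      {p : ℝ × ℝ | p.2 ≤ p.1}.indicator (fun p => f p.2) (t, s) := by
    refine setIntegral_congr_fun measurableSet_Ioc fun t ht => ?_
    have : (fun s => {p : ℝ × ℝ | p.2 ≤ p.1}.indicator (fun p => f p.2) (t, s))
        = (Iic t).indicator f := by
      ext s; simp [indicator]
    simp only [this, Vtot]
    rw [setIntegral_indicator measurableSet_Iic]
    congr 2
    ext s
    simp only [mem_Ioc, mem_inter_iff, mem_Iic]
    constructor
    · rintro ⟨h1, h2⟩; exact ⟨⟨h1, h2.trans ht.2⟩, h2⟩
    · rintro ⟨⟨h1, _⟩, h2⟩; exact ⟨h1, h2⟩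
  have hr : ∫ s in Ioc (0 : ℝ) T, (T - s) * f s = ∫ s in Ioc (0 : ℝ) T, ∫ t in Ioc (0 : ℝ) T,
      {p : ℝ × ℝ | p.2 ≤ p.1}.indicator (fun p => f p.2) (t, s) := by
    refine setIntegral_congr_fun measurableSet_Ioc fun s hs => ?_
    have : (fun t => {p : ℝ × ℝ | p.2 ≤ p.1}.indicator (fun p => f p.2) (t, s))
        = (Ici s).indicator (fun _ => f s) := by
      ext t; simp [indicator]
    simp only [this]
    have hset : Ioc 0 T ∩ Ici s = Icc s T := by
      ext t
      simp only [mem_Ioc, mem_inter_iff, mem_Ici, mem_Icc]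
      constructor
      · rintro ⟨⟨_, h1⟩, h2⟩; exact ⟨h2, h1⟩
      · rintro ⟨h1, h2⟩; exact ⟨⟨hs.1.trans_le h1, h2⟩, h1⟩
    rw [setIntegral_indicator measurableSet_Ici, hset, setIntegral_const]
    simp [hs.2]
  rw [hl, hr, hswap]

lemma integrableOn_Vtot {T : ℝ} {f : ℝ → ℝ} (hf : IntegrableOn f (Ioc 0 T)) :
    IntegrableOn (Vtot f) (Ioc 0 T) := by
  have h : ContinuousOn (Vtot f) (Icc 0 T) := by
    refine (intervalIntegral.continuousOn_primitive
      ((integrableOn_Icc_iff_integrableOn_Ioc).2 hf)).congr fun t ht => rfl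
  exact (h.integrableOn_Icc).mono_set Ioc_subset_Icc_self

lemma vk_den_pos {T k t : ℝ} (hT : 0 < T) (hk1 : k < 1) (ht : t ∈ Icc (0 : ℝ) T) :
    0 < T - t * k := by
  rcases le_or_gt k 0 with h | h
  · nlinarith [ht.1, ht.2]
  · nlinarith [ht.1, ht.2]

lemma continuousOn_vk {T k : ℝ} (hT : 0 < T) (hk1 : k < 1) :
    ContinuousOn (vk T k) (Icc 0 T) := by
  unfold vk
  exact continuousOn_const.div (by fun_prop) fun t ht => (vk_den_pos hT hk1 ht).ne'

lemma integrableOn_vk {T k : ℝ} (hT : 0 < T) (hk1 : k < 1) :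
    IntegrableOn (vk T k) (Ioc 0 T) :=
  (continuousOn_vk hT hk1).integrableOn_Icc.mono_set Ioc_subset_Icc_self

lemma Vtot_vk {T k t : ℝ} (hT : 0 < T) (hk1 : k < 1) (ht : t ∈ Icc (0 : ℝ) T) :
    Vtot (vk T k) t = Real.log T - Real.log (T - t * k) := by
  rw [Vtot, ← intervalIntegral.integral_of_le ht.1,
    intervalIntegral.integral_eq_sub_of_hasDerivAt (f := fun s => -Real.log (T - s * k))]
  · simp; ring
  · intro s hs
    rw [uIcc_of_le ht.1] at hs
    have hp := vk_den_pos hT hk1 ⟨hs.1, hs.2.trans ht.2⟩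
    have h1 : HasDerivAt (fun s : ℝ => T - s * k) (-k) s := by
      simpa using ((hasDerivAt_id s).mul_const k).const_sub T
    exact (h1.log hp.ne').fun_neg.congr_deriv (by unfold vk; ring)
  · refine ContinuousOn.intervalIntegrable ?_
    rw [uIcc_of_le ht.1]
    exact (continuousOn_vk hT hk1).mono (Icc_subset_Icc_right ht.2)

lemma Vtot_vk_end {T k : ℝ} (hT : 0 < T) (hk1 : k < 1) :
    Vtot (vk T k) T = -Real.log (1 - k) := by
  rw [Vtot_vk hT hk1 ⟨hT.le, le_rfl⟩, show T - T * k = T * (1 - k) by ring,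
    Real.log_mul hT.ne' (by linarith)]
  ring

lemma log_vk_sub_Vtot {T k t : ℝ} (hT : 0 < T) (hk0 : 0 < k) (hk1 : k < 1)
    (ht : t ∈ Icc (0 : ℝ) T) :
    Real.log (vk T k t) - Vtot (vk T k) t = Real.log k - Real.log T := by
  rw [Vtot_vk hT hk1 ht, vk, Real.log_div hk0.ne' (vk_den_pos hT hk1 ht).ne']
  ring

lemma setIntegral_log_vk {T k : ℝ} (hT : 0 < T) (hk0 : 0 < k) (hk1 : k < 1) :
    ∫ t in Ioc (0 : ℝ) T, (Real.log (vk T k t) - Vtot (vk T k) t)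
      = T * Real.log k - T * Real.log T := by
  rw [setIntegral_congr_fun measurableSet_Ioc
    fun t ht => log_vk_sub_Vtot hT hk0 hk1 (Ioc_subset_Icc_self ht), setIntegral_const]
  simp [hT.le]; ring

lemma integrableOn_log {T : ℝ} {v : ℝ → ℝ} (hm : Measurable v)
    (hpos : ∀ t ∈ Icc (0 : ℝ) T, 0 < v t) (hv : IntegrableOn v (Ioc 0 T))
    (hneg : IntegrableOn (fun t => max (-Real.log (v t)) 0) (Ioc 0 T)) :
    IntegrableOn (fun t => Real.log (v t)) (Ioc 0 T) := by
  refine Integrable.mono' (hv.add hneg)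
    (Real.measurable_log.comp hm).aestronglyMeasurable ?_
  refine ae_restrict_of_forall_mem measurableSet_Ioc fun t ht => ?_
  have hp := hpos t (Ioc_subset_Icc_self ht)
  have := Real.log_le_sub_one_of_pos hp
  simp only [Real.norm_eq_abs, Pi.add_apply]
  refine abs_le.2 ⟨?_, ?_⟩
  · linarith [le_max_left (-Real.log (v t)) 0]
  · linarith [le_max_right (-Real.log (v t)) 0]

lemma consumption_le {T k : ℝ} {v : ℝ → ℝ} (hT : 0 < T) (hk0 : 0 < k) (hk1 : k < 1)
    (hm : Measurable v) (hpos : ∀ t ∈ Icc (0 : ℝ) T, 0 < v t) (hv : IntegrableOn v (Ioc 0 T))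
    (hneg : IntegrableOn (fun t => max (-Real.log (v t)) 0) (Ioc 0 T))
    (hVT : Vtot v T = -Real.log (1 - k)) :
    ∫ t in Ioc (0 : ℝ) T, (Real.log (v t) - Vtot v t) ≤ T * Real.log k - T * Real.log T := by
  have hw := integrableOn_vk hT hk1
  have hf : IntegrableOn (fun t => v t - vk T k t) (Ioc 0 T) := hv.sub hw
  have hmul : IntegrableOn (fun t => (T / k - t) * (v t - vk T k t)) (Ioc 0 T) := by
    refine integrableOn_bdd_mul (C := |T / k| + T) (by fun_prop) (fun t ht => ?_) hf
    refine (abs_sub _ _).trans ?_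
    rw [abs_of_pos ht.1]
    linarith [ht.2]
  have hmul' : IntegrableOn (fun t => (T - t) * (v t - vk T k t)) (Ioc 0 T) := by
    refine integrableOn_bdd_mul (C := T) (by fun_prop) (fun t ht => ?_) hf
    rw [abs_of_nonneg] <;> linarith [ht.1, ht.2]
  have hVf := integrableOn_Vtot hf
  have hdiff : IntegrableOn (fun t => (T / k - t) * (v t - vk T k t)
      - Vtot (fun t => v t - vk T k t) t) (Ioc 0 T) := hmul.sub hVf
  have hconst : IntegrableOn (fun _ : ℝ => Real.log k - Real.log T) (Ioc 0 T) := by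
    simp
  have hle : ∫ t in Ioc (0 : ℝ) T, (Real.log (v t) - Vtot v t) ≤
      ∫ t in Ioc (0 : ℝ) T, ((Real.log k - Real.log T)
        + ((T / k - t) * (v t - vk T k t) - Vtot (fun t => v t - vk T k t) t)) := by
    refine setIntegral_mono_on
      ((integrableOn_log hm hpos hv hneg).sub (integrableOn_Vtot hv))
      (hconst.add hdiff) measurableSet_Ioc fun t ht => ?_
    have ht' := Ioc_subset_Icc_self ht
    have hd := vk_den_pos hT hk1 ht'
    have hvk : 0 < vk T k t := div_pos hk0 hd
    have hsub : Vtot (fun t => v t - vk T k t) t = Vtot v t - Vtot (vk T k) t :=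
      integral_sub (hv.mono_set (Ioc_subset_Ioc_right ht.2))
        (hw.mono_set (Ioc_subset_Ioc_right ht.2))
    rw [hsub, ← log_vk_sub_Vtot hT hk0 hk1 ht']
    have hlog := Real.log_le_sub_one_of_pos (div_pos (hpos t ht') hvk)
    rw [Real.log_div (hpos t ht').ne' hvk.ne'] at hlog
    have heq : v t / vk T k t - 1 = (T / k - t) * (v t - vk T k t) := by
      unfold vk
      field_simp
      ring_nf
      have : T - k * t ≠ 0 := by rw [mul_comm]; exact hd.ne'
      field_simp
      ring
    linarith
  refine hle.trans (le_of_eq ?_)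
  rw [integral_add hconst hdiff, integral_sub hmul hVf, setIntegral_primitive hf,
    ← integral_sub hmul hmul', setIntegral_const]
  have h0 : ∫ t in Ioc (0 : ℝ) T, (v t - vk T k t) = 0 := by
    rw [integral_sub hv hw]
    have := Vtot_vk_end hT hk1
    unfold Vtot at this hVT
    linarith
  have h1 : ∀ t : ℝ, (T / k - t) * (v t - vk T k t) - (T - t) * (v t - vk T k t)
      = (T / k - T) * (v t - vk T k t) := fun t => by ring
  simp only [h1]
  rw [integral_const_mul, h0]
  simp [hT.le]; ring

lemma one_le_om {T t : ℝ} (ht : t ∈ Ioc (0 : ℝ) T) : 1 ≤ om T t := by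
  unfold om; linarith [ht.2]

lemma om_le {T t : ℝ} (ht : t ∈ Ioc (0 : ℝ) T) : om T t ≤ T + 1 := by
  unfold om; linarith [ht.1]

lemma Gfun_nrm_le_one {d : ℕ} {T qa lam : ℝ} {θ : ℝ → E d} (hθ : L2fun T θ)
    (hθpos : 0 < nrm θ T) (hlam : 0 ≤ lam) : Gfun T θ qa (nrm θ T) lam ≤ 1 := by
  have h : Gfun T θ qa (nrm θ T) lam
      ≤ ∫ t in Ioc (0 : ℝ) T, (1 / nrm θ T ^ 2) * ‖θ t‖ ^ 2 := by
    refine integral_mono_of_nonneg (Eventually.of_forall fun t => by positivity)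
      (hθ.2.const_mul _) (ae_restrict_of_forall_mem measurableSet_Ioc fun t ht => ?_)
    have hw := one_le_om ht
    have hp : 0 < nrm θ T * (om T t + lam) := by positivity
    have hq : 0 ≤ lam * |qa| := by positivity
    change (om T t + lam) ^ 2 * ‖θ t‖ ^ 2 / (lam * |qa| + nrm θ T * (om T t + lam)) ^ 2 ≤ _
    calc _ ≤ (om T t + lam) ^ 2 * ‖θ t‖ ^ 2 / (nrm θ T * (om T t + lam)) ^ 2 := by
          gcongr; linarith
      _ = _ := by field_simp
  refine h.trans (le_of_eq ?_)
  rw [integral_const_mul, ← nrm_sq]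
  field_simp

lemma continuousOn_Gfun {d : ℕ} {T qa lam : ℝ} {θ : ℝ → E d} (hθ : L2fun T θ)
    (hqa : 0 < |qa|) (hlam : 0 < lam) :
    ContinuousOn (fun u => Gfun T θ qa u lam) (Ici 0) := by
  unfold Gfun
  refine continuousOn_of_dominated
    (bound := fun t => ((T + 1 + lam) ^ 2 / (lam * |qa|) ^ 2) * ‖θ t‖ ^ 2) ?_ ?_
    (hθ.2.const_mul _) ?_
  · intro u _
    refine Measurable.aestronglyMeasurable ?_
    have h1 := measurable_om T
    have h2 := hθ.1
    fun_prop
  · intro u hu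
    refine ae_restrict_of_forall_mem measurableSet_Ioc fun t ht => ?_
    have hw := one_le_om ht
    have hw' := om_le ht
    have hu' : 0 ≤ u := hu
    have hp : 0 < lam * |qa| := by positivity
    have huw : 0 ≤ u * (om T t + lam) := by positivity
    rw [Real.norm_of_nonneg (by positivity), div_mul_eq_mul_div]
    gcongr
    linarith
  · refine ae_restrict_of_forall_mem measurableSet_Ioc fun t ht => ?_
    have hw := one_le_om ht
    refine ContinuousOn.div (by fun_prop) (by fun_prop) fun u hu => ?_
    have hu' : 0 ≤ u := hu
    positivity

/-- `ρ(λ)` is finite, and either `τ_λ` vanishes identically or `G(ρ(λ), λ) = 1`. -/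
lemma tau_eq_zero_or {d : ℕ} {T qa lam : ℝ} {θ : ℝ → E d} (hθ : L2fun T θ)
    (hθpos : 0 < nrm θ T) (hqa : 0 < |qa|) (hlam : 0 ≤ lam) :
    (∀ t, tau T θ qa lam t = 0) ∨ ∃ ρ, 0 < ρ ∧ 0 < lam ∧ Gfun T θ qa ρ lam = 1 ∧
      ∀ t, tau T θ qa lam t = ρ * (om T t + lam) / (lam * |qa| + ρ * (om T t + lam)) := by
  set S : Set ℝ := {u : ℝ | 0 ≤ u ∧ Gfun T θ qa u lam ≤ 1} with hS
  have hne : S.Nonempty := ⟨nrm θ T, hθpos.le, Gfun_nrm_le_one hθ hθpos hlam⟩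
  have hbdd : BddBelow S := ⟨0, fun u hu => hu.1⟩
  have hs0 : 0 ≤ sInf S := le_csInf hne fun u hu => hu.1
  have hrho : rho T θ qa lam = ENNReal.ofReal (sInf S) := by
    rw [rho, if_pos hne]
  have htau : ∀ t, tau T θ qa lam t
      = sInf S * (om T t + lam) / (lam * |qa| + sInf S * (om T t + lam)) := by
    intro t
    rw [tau, hrho, if_neg ENNReal.ofReal_ne_top, ENNReal.toReal_ofReal hs0]
  rcases hs0.eq_or_lt with h0 | hpos
  · left
    intro t
    rw [htau, ← h0]; simp
  · right
    have h0S : (0 : ℝ) ∉ S := fun h => (csInf_le hbdd h).not_gt hpos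
    have hlam' : 0 < lam := by
      refine hlam.lt_of_ne' fun h => h0S ⟨le_rfl, ?_⟩
      simp [Gfun, h]
    have hcont := continuousOn_Gfun hθ hqa hlam'
    have hclosed : IsClosed S := by
      have := hcont.preimage_isClosed_of_isClosed isClosed_Ici isClosed_Iic (t := Iic 1)
      exact this
    have hmem : sInf S ∈ S := hclosed.csInf_mem hne hbdd
    have hG0 : 1 ≤ Gfun T θ qa 0 lam := by
      by_contra! h
      exact h0S ⟨le_rfl, h.le⟩
    obtain ⟨u, hu, hGu⟩ := intermediate_value_Icc' hs0
      (hcont.mono Icc_subset_Ici_self) ⟨hmem.2, hG0⟩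
    have hus : u = sInf S := le_antisymm hu.2 (csInf_le hbdd ⟨hu.1, hGu.le⟩)
    refine ⟨sInf S, hpos, hlam', ?_, htau⟩
    rw [← hus]; exact hGu

lemma measurable_tau {d : ℕ} {T qa lam : ℝ} {θ : ℝ → E d} : Measurable (tau T θ qa lam) := by
  have h := measurable_om T
  unfold tau
  split_ifs <;> fun_prop

lemma tau_mem {d : ℕ} {T qa lam : ℝ} {θ : ℝ → E d} (hlam : 0 ≤ lam) {t : ℝ}
    (ht : t ∈ Ioc (0 : ℝ) T) : 0 ≤ tau T θ qa lam t ∧ tau T θ qa lam t ≤ 1 := by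
  have hw := one_le_om ht
  have hq : 0 ≤ lam * |qa| := by positivity
  unfold tau
  split_ifs
  · simp
  · set ρ := (rho T θ qa lam).toReal
    have hp : 0 ≤ ρ * (om T t + lam) := by positivity
    exact ⟨by positivity, div_le_one_of_le₀ (by linarith) (by positivity)⟩

lemma L2fun_tau_smul {d : ℕ} {T qa lam : ℝ} {θ : ℝ → E d} (hθ : L2fun T θ) (hlam : 0 ≤ lam) :
    L2fun T (fun t => tau T θ qa lam t • θ t) := by
  refine ⟨measurable_tau.smul hθ.1, ?_⟩
  have h := integrableOn_bdd_mul (C := 1) ((measurable_tau (T := T) (qa := qa) (lam := lam)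
    (θ := θ)).pow_const 2) (fun t ht => ?_) hθ.2
  · refine h.congr_fun (fun t _ => ?_) measurableSet_Ioc
    simp [norm_smul, mul_pow]
  · obtain ⟨h0, h1⟩ := tau_mem (θ := θ) (qa := qa) hlam ht
    rw [abs_of_nonneg (sq_nonneg _)]
    exact pow_le_one₀ h0 h1

lemma nrm_tau_smul_sq {d : ℕ} {T qa lam : ℝ} {θ : ℝ → E d} (t : ℝ) :
    nrm (fun t => tau T θ qa lam t • θ t) t ^ 2
      = ∫ s in Ioc (0 : ℝ) t, tau T θ qa lam s ^ 2 * ‖θ s‖ ^ 2 := by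
  rw [nrm_sq]
  simp [norm_smul, mul_pow]

lemma nrm_tau_smul {d : ℕ} {T qa lam ρ : ℝ} {θ : ℝ → E d} (hρ : 0 < ρ)
    (hG : Gfun T θ qa ρ lam = 1)
    (htau : ∀ t, tau T θ qa lam t = ρ * (om T t + lam) / (lam * |qa| + ρ * (om T t + lam))) :
    nrm (fun t => tau T θ qa lam t • θ t) T = ρ := by
  refine (sq_eq_sq₀ (nrm_nonneg _ _) hρ.le).1 ?_
  rw [nrm_tau_smul_sq, ← mul_one (ρ ^ 2), ← hG, Gfun, ← integral_const_mul]
  refine integral_congr_ae (Eventually.of_forall fun t => ?_)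
  simp only [htau, div_pow, mul_pow]
  ring

/-- A VaR budget `K(y) ≤ b` with `Φ(λ) = b` cannot do better than `τ_λ θ`. -/
lemma investment_le {d : ℕ} {T qa lam b : ℝ} {θ y : ℝ → E d} (hθ : L2fun T θ) (hy : L2fun T y)
    (hθpos : 0 < nrm θ T) (hq : nrm θ T < |qa|) (hlam : 0 ≤ lam) (hPhi : Phi T θ qa lam = b)
    (hK : |qa| * nrm y T + nrm y T ^ 2 / 2 - ipr y θ T ≤ b) :
    ∫ t in Ioc (0 : ℝ) T, om T t * (⟪y t, θ t⟫ - ‖y t‖ ^ 2 / 2)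
      ≤ ∫ t in Ioc (0 : ℝ) T, om T t * ‖θ t‖ ^ 2 *
        (tau T θ qa lam t - tau T θ qa lam t ^ 2 / 2) := by
  have hτm : Measurable (tau T θ qa lam) := measurable_tau
  have hnn := nrm_nonneg y T
  rcases tau_eq_zero_or hθ hθpos (hθpos.trans hq) hlam with h0 | ⟨ρ, hρ, hlam', hG, htau⟩
  · have hb : b = 0 := by
      rw [← hPhi, Phi]
      simp [h0, nrm]
    have hcs := ipr_le_nrm_mul_nrm hy hθ
    have hn0 : nrm y T = 0 := by nlinarith
    have hy0 : ∫ s in Ioc (0 : ℝ) T, ‖y s‖ ^ 2 = 0 := by rw [← nrm_sq, hn0]; norm_num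
    rw [integral_eq_zero_iff_of_nonneg (fun _ => sq_nonneg _) hy.2] at hy0
    have : ∫ t in Ioc (0 : ℝ) T, om T t * (⟪y t, θ t⟫ - ‖y t‖ ^ 2 / 2) = 0 := by
      refine integral_eq_zero_of_ae ?_
      filter_upwards [hy0] with t ht
      have : y t = 0 := by simpa using ht
      simp [this]
    rw [this]
    simp [h0]
  · have hρn : nrm (fun t => tau T θ qa lam t • θ t) T = ρ := nrm_tau_smul hρ hG htau
    have hρ2 := nrm_tau_smul_sq (T := T) (qa := qa) (lam := lam) (θ := θ) T
    rw [hρn] at hρ2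
    have hτ2 : ∀ t ∈ Ioc (0 : ℝ) T, |tau T θ qa lam t ^ 2| ≤ 1 := fun t ht => by
      obtain ⟨h0, h1⟩ := tau_mem (θ := θ) (qa := qa) hlam ht
      rw [abs_of_nonneg (sq_nonneg _)]
      exact pow_le_one₀ h0 h1
    have hτ1 : ∀ t ∈ Ioc (0 : ℝ) T, |tau T θ qa lam t| ≤ 1 := fun t ht => by
      obtain ⟨h0, h1⟩ := tau_mem (θ := θ) (qa := qa) hlam ht
      rwa [abs_of_nonneg h0]
    have hI := integrableOn_inner hy hθ
    have hi1 := integrableOn_bdd_mul hτm hτ1 hθ.2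
    have hi2 := integrableOn_bdd_mul (hτm.pow_const 2) hτ2 hθ.2
    have hi3 := integrableOn_bdd_mul hτm hτ1 hI
    have hcs : ∫ t in Ioc (0 : ℝ) T, tau T θ qa lam t * ⟪y t, θ t⟫ ≤ nrm y T * ρ := by
      have := ipr_le_nrm_mul_nrm hy (L2fun_tau_smul (qa := qa) hθ hlam)
      rw [hρn] at this
      simpa only [ipr, real_inner_smul_right] using this
    have hyh : IntegrableOn (fun t => ‖y t‖ ^ 2 / 2) (Ioc 0 T) := hy.2.div_const 2
    have hi2h : IntegrableOn (fun t => tau T θ qa lam t ^ 2 * ‖θ t‖ ^ 2 / 2) (Ioc 0 T) :=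
      hi2.div_const 2
    have hiA : IntegrableOn (fun t => ⟪y t, θ t⟫ - ‖y t‖ ^ 2 / 2) (Ioc 0 T) := hI.sub hyh
    have hiB : IntegrableOn (fun t => tau T θ qa lam t * ‖θ t‖ ^ 2
        - tau T θ qa lam t ^ 2 * ‖θ t‖ ^ 2 / 2) (Ioc 0 T) := hi1.sub hi2h
    have hiC : IntegrableOn (fun t => lam * ((tau T θ qa lam t * ‖θ t‖ ^ 2
        - tau T θ qa lam t ^ 2 * ‖θ t‖ ^ 2 / 2) - (⟪y t, θ t⟫ - ‖y t‖ ^ 2 / 2))) (Ioc 0 T) :=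
      (hiB.sub hiA).const_mul _
    have hiD : IntegrableOn (fun t => (lam * |qa| / ρ) * (tau T θ qa lam t * ⟪y t, θ t⟫
        - tau T θ qa lam t ^ 2 * ‖θ t‖ ^ 2)) (Ioc 0 T) := (hi3.sub hi2).const_mul _
    have hiE : IntegrableOn (fun t => om T t * ‖θ t‖ ^ 2 *
        (tau T θ qa lam t - tau T θ qa lam t ^ 2 / 2)) (Ioc 0 T) := by
      refine (integrableOn_bdd_mul (measurable_om T) (fun t ht => abs_om_le ht) hiB).congr_fun
        (fun t _ => ?_) measurableSet_Ioc
      ring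
    have hiCD : IntegrableOn (fun t => lam * ((tau T θ qa lam t * ‖θ t‖ ^ 2
        - tau T θ qa lam t ^ 2 * ‖θ t‖ ^ 2 / 2) - (⟪y t, θ t⟫ - ‖y t‖ ^ 2 / 2))
        + (lam * |qa| / ρ) * (tau T θ qa lam t * ⟪y t, θ t⟫
        - tau T θ qa lam t ^ 2 * ‖θ t‖ ^ 2)) (Ioc 0 T) := hiC.add hiD
    have hle : ∫ t in Ioc (0 : ℝ) T, om T t * (⟪y t, θ t⟫ - ‖y t‖ ^ 2 / 2)
        ≤ ∫ t in Ioc (0 : ℝ) T, (om T t * ‖θ t‖ ^ 2 *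
            (tau T θ qa lam t - tau T θ qa lam t ^ 2 / 2)
          + (lam * ((tau T θ qa lam t * ‖θ t‖ ^ 2
              - tau T θ qa lam t ^ 2 * ‖θ t‖ ^ 2 / 2) - (⟪y t, θ t⟫ - ‖y t‖ ^ 2 / 2))
            + (lam * |qa| / ρ) * (tau T θ qa lam t * ⟪y t, θ t⟫
              - tau T θ qa lam t ^ 2 * ‖θ t‖ ^ 2))) := by
      refine setIntegral_mono_on
        (integrableOn_bdd_mul (measurable_om T) (fun t ht => abs_om_le ht) hiA)
        (hiE.add hiCD) measurableSet_Ioc fun t ht => ?_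
      have hw := one_le_om ht
      have hw0 : 0 < om T t + lam := by linarith
      have hlag : (lam * |qa| / ρ) * tau T θ qa lam t
          = (om T t + lam) * (1 - tau T θ qa lam t) := by
        rw [htau]
        have : 0 < lam * |qa| + ρ * (om T t + lam) := by positivity
        field_simp
        ring
      have hsq := norm_sub_sq_real (y t) (tau T θ qa lam t • θ t)
      rw [real_inner_smul_right, norm_smul, mul_pow, Real.norm_eq_abs, sq_abs] at hsq
      have hp := mul_nonneg hw0.le (sq_nonneg ‖y t - tau T θ qa lam t • θ t‖)
      rw [hsq] at hp
      have e : (lam * |qa| / ρ) * (tau T θ qa lam t * ⟪y t, θ t⟫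
          - tau T θ qa lam t ^ 2 * ‖θ t‖ ^ 2) = (om T t + lam) * (1 - tau T θ qa lam t)
            * (⟪y t, θ t⟫ - tau T θ qa lam t * ‖θ t‖ ^ 2) := by
        rw [← hlag]; ring
      rw [e]
      linarith
    refine hle.trans ?_
    rw [integral_add hiE hiCD, integral_add hiC hiD, integral_const_mul, integral_const_mul,
      integral_sub hiB hiA, integral_sub hi1 hi2h, integral_sub hI hyh, integral_sub hi3 hi2,
      integral_div, integral_div, ← hρ2, ← nrm_sq]
    rw [Phi, hρn] at hPhi
    rw [ipr] at hK
    have h1 : lam * (∫ t in Ioc (0 : ℝ) T, tau T θ qa lam t * ‖θ t‖ ^ 2) - lam * (ρ ^ 2 / 2)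
        - lam * ((∫ t in Ioc (0 : ℝ) T, ⟪y t, θ t⟫) - nrm y T ^ 2 / 2)
        ≤ lam * (|qa| * (ρ - nrm y T)) := by
      rw [← mul_sub, ← mul_sub]
      exact mul_le_mul_of_nonneg_left (by linarith) hlam
    have h2 : (lam * |qa| / ρ) * ((∫ t in Ioc (0 : ℝ) T, tau T θ qa lam t * ⟪y t, θ t⟫) - ρ ^ 2)
        ≤ lam * (|qa| * (nrm y T - ρ)) := by
      calc _ ≤ (lam * |qa| / ρ) * (nrm y T * ρ - ρ ^ 2) :=
            mul_le_mul_of_nonneg_left (by linarith) (by positivity)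
        _ = _ := by field_simp
    linarith

/-- The VaR functional of `τ_λ θ` is maximal at the terminal time. -/
lemma VaR_tau_smul_le {d : ℕ} {T qa lam t : ℝ} {θ : ℝ → E d} (hT : 0 < T) (hθ : L2fun T θ)
    (hθpos : 0 < nrm θ T) (hqbig : 2 * (T + 1) * nrm θ T ≤ |qa|) (hlam : 0 ≤ lam)
    (ht : t ∈ Icc (0 : ℝ) T) :
    |qa| * nrm (fun t => tau T θ qa lam t • θ t) t
      + nrm (fun t => tau T θ qa lam t • θ t) t ^ 2 / 2
      - ipr (fun t => tau T θ qa lam t • θ t) θ t ≤ Phi T θ qa lam := by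
  have hq : 0 < |qa| := by nlinarith
  have hτm : Measurable (tau T θ qa lam) := measurable_tau
  rcases tau_eq_zero_or hθ hθpos hq hlam with h0 | ⟨ρ, hρ, hlam', hG, htau⟩
  · simp [h0, nrm, ipr, Phi]
  have hρn : nrm (fun t => tau T θ qa lam t • θ t) T = ρ := nrm_tau_smul hρ hG htau
  set n := nrm (fun t => tau T θ qa lam t • θ t) t with hn
  have hn0 : 0 ≤ n := nrm_nonneg _ _
  have hi1 : IntegrableOn (fun t => tau T θ qa lam t * ‖θ t‖ ^ 2) (Ioc 0 T) := by
    refine integrableOn_bdd_mul (C := 1) hτm (fun t ht => ?_) hθ.2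
    obtain ⟨h0, h1⟩ := tau_mem (θ := θ) (qa := qa) hlam ht
    rwa [abs_of_nonneg h0]
  have hi2 : IntegrableOn (fun t => tau T θ qa lam t ^ 2 * ‖θ t‖ ^ 2) (Ioc 0 T) := by
    refine integrableOn_bdd_mul (C := 1) (hτm.pow_const 2) (fun t ht => ?_) hθ.2
    obtain ⟨h0, h1⟩ := tau_mem (θ := θ) (qa := qa) hlam ht
    rw [abs_of_nonneg (sq_nonneg _)]
    exact pow_le_one₀ h0 h1
  have hunion : Ioc 0 T = Ioc 0 t ∪ Ioc t T := (Ioc_union_Ioc_eq_Ioc ht.1 ht.2).symm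
  have hsub1 : Ioc 0 t ⊆ Ioc 0 T := Ioc_subset_Ioc_right ht.2
  have hsub2 : Ioc t T ⊆ Ioc 0 T := Ioc_subset_Ioc_left ht.1
  have hdisj : Disjoint (Ioc 0 t) (Ioc t T) := Ioc_disjoint_Ioc_of_le le_rfl
  have hs1 : ∫ s in Ioc (0 : ℝ) T, tau T θ qa lam s * ‖θ s‖ ^ 2
      = (∫ s in Ioc (0 : ℝ) t, tau T θ qa lam s * ‖θ s‖ ^ 2)
        + ∫ s in Ioc t T, tau T θ qa lam s * ‖θ s‖ ^ 2 := by
    rw [hunion]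
    exact setIntegral_union hdisj measurableSet_Ioc (hi1.mono_set hsub1) (hi1.mono_set hsub2)
  have hs2 : ρ ^ 2 = n ^ 2 + ∫ s in Ioc t T, tau T θ qa lam s ^ 2 * ‖θ s‖ ^ 2 := by
    rw [← hρn, hn, nrm_tau_smul_sq, nrm_tau_smul_sq, hunion]
    exact setIntegral_union hdisj measurableSet_Ioc (hi2.mono_set hsub1) (hi2.mono_set hsub2)
  have hBnn : 0 ≤ ∫ s in Ioc t T, tau T θ qa lam s ^ 2 * ‖θ s‖ ^ 2 :=
    integral_nonneg fun _ => by positivity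
  have hnρ : n ≤ ρ := le_of_sq_le_sq (by linarith) hρ.le
  -- `λ q + ρ (T + 1 + λ) ≤ ‖θ‖ (T + 1 + λ)`
  have hbound : lam * |qa| + ρ * (T + 1 + lam) ≤ nrm θ T * (T + 1 + lam) := by
    have hD : 0 < lam * |qa| + ρ * (T + 1 + lam) := by positivity
    have h1 : (1 : ℝ) ≤ ((T + 1 + lam) / (lam * |qa| + ρ * (T + 1 + lam))) ^ 2 * nrm θ T ^ 2 := by
      refine hG.ge.trans ?_
      rw [Gfun, nrm_sq, ← integral_const_mul]
      refine integral_mono_of_nonneg (Eventually.of_forall fun t => by positivity)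
        (hθ.2.const_mul _) (ae_restrict_of_forall_mem measurableSet_Ioc fun s hs => ?_)
      have hw := one_le_om hs
      have hw' := om_le hs
      have hD' : 0 < lam * |qa| + ρ * (om T s + lam) := by positivity
      have h2 : (om T s + lam) / (lam * |qa| + ρ * (om T s + lam))
          ≤ (T + 1 + lam) / (lam * |qa| + ρ * (T + 1 + lam)) := by
        rw [div_le_div_iff₀ hD' hD]
        nlinarith [mul_pos hlam' hq]
      change (om T s + lam) ^ 2 * ‖θ s‖ ^ 2 / (lam * |qa| + ρ * (om T s + lam)) ^ 2 ≤ _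
      rw [mul_div_right_comm, ← div_pow]
      exact mul_le_mul_of_nonneg_right (pow_le_pow_left₀ (by positivity) h2 2) (sq_nonneg _)
    rw [← mul_pow, div_mul_eq_mul_div, div_pow, one_le_div (by positivity)] at h1
    rw [mul_comm (nrm θ T)]
    exact le_of_sq_le_sq h1 (by positivity)
  have hρN : ρ < nrm θ T := by
    have : 0 < lam * |qa| := by positivity
    have h3 : 0 < T + 1 + lam := by positivity
    nlinarith
  have hlamb : lam * (|qa| + ρ) ≤ |qa| - ρ := by
    have hN : nrm θ T ≤ |qa| / 2 := by nlinarith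
    have h1 : lam * (|qa| / 2 + ρ) ≤ lam * (|qa| - nrm θ T + ρ) :=
      mul_le_mul_of_nonneg_left (by linarith) hlam
    nlinarith [mul_pos hlam' hρ, mul_pos hT hρ]
  have hpt : ∫ s in Ioc t T, tau T θ qa lam s * ‖θ s‖ ^ 2
      ≤ (|qa| / (2 * ρ) + 1 / 2) * ∫ s in Ioc t T, tau T θ qa lam s ^ 2 * ‖θ s‖ ^ 2 := by
    rw [← integral_const_mul]
    refine setIntegral_mono_on (hi1.mono_set hsub2) ((hi2.mono_set hsub2).const_mul _)
      measurableSet_Ioc fun s hs => ?_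
    have hw := one_le_om (hsub2 hs)
    have hD' : 0 < lam * |qa| + ρ * (om T s + lam) := by positivity
    have h1 : 1 ≤ (|qa| / (2 * ρ) + 1 / 2) * tau T θ qa lam s := by
      have e : (|qa| / (2 * ρ) + 1 / 2) * tau T θ qa lam s
          = ((|qa| + ρ) * (om T s + lam)) / (2 * (lam * |qa| + ρ * (om T s + lam))) := by
        rw [htau]; field_simp
      rw [e, one_le_div (by positivity)]
      nlinarith [mul_le_mul_of_nonneg_right hw (show (0 : ℝ) ≤ |qa| - ρ by nlinarith)]
    have h2 : 0 ≤ tau T θ qa lam s * ‖θ s‖ ^ 2 :=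
      mul_nonneg (tau_mem hlam (hsub2 hs)).1 (sq_nonneg _)
    nlinarith [mul_le_mul_of_nonneg_right h1 h2]
  have hipr : ipr (fun t => tau T θ qa lam t • θ t) θ t
      = ∫ s in Ioc (0 : ℝ) t, tau T θ qa lam s * ‖θ s‖ ^ 2 := by
    simp [ipr, real_inner_smul_left]
  rw [hipr, Phi, hρn, hs1]
  have hB : ∫ s in Ioc t T, tau T θ qa lam s ^ 2 * ‖θ s‖ ^ 2 = ρ ^ 2 - n ^ 2 := by linarith
  rw [hB] at hpt
  have h4 : |qa| / (2 * ρ) * (ρ ^ 2 - n ^ 2) ≤ |qa| * (ρ - n) := by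
    rw [div_mul_eq_mul_div, div_le_iff₀ (by positivity)]
    nlinarith [mul_nonneg (mul_nonneg hq.le (sub_nonneg.2 hnρ)) (sub_nonneg.2 hnρ)]
  linarith

lemma setIntegral_om_mul_add {d : ℕ} {T : ℝ} {r : ℝ → ℝ} {θ y : ℝ → E d} (hθ : L2fun T θ)
    (hy : L2fun T y) (hr : IntegrableOn r (Ioc 0 T)) :
    ∫ t in Ioc (0 : ℝ) T, om T t * (r t + ⟪y t, θ t⟫ - ‖y t‖ ^ 2 / 2)
      = (∫ t in Ioc (0 : ℝ) T, om T t * r t)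
        + ∫ t in Ioc (0 : ℝ) T, om T t * (⟪y t, θ t⟫ - ‖y t‖ ^ 2 / 2) := by
  have h : IntegrableOn (fun t => ⟪y t, θ t⟫ - ‖y t‖ ^ 2 / 2) (Ioc 0 T) :=
    (integrableOn_inner hy hθ).sub (hy.2.div_const 2)
  rw [← integral_add (integrableOn_bdd_mul (measurable_om T) (fun t ht => abs_om_le ht) hr)
    (integrableOn_bdd_mul (measurable_om T) (fun t ht => abs_om_le ht) h)]
  congr 1
  ext t
  ring

lemma Vtot_vk_le {T k t : ℝ} (hT : 0 < T) (hk0 : 0 ≤ k) (hk1 : k < 1)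
    (ht : t ∈ Icc (0 : ℝ) T) : Vtot (vk T k) t ≤ -Real.log (1 - k) := by
  rw [← Vtot_vk_end hT hk1, Vtot_vk hT hk1 ht, Vtot_vk hT hk1 ⟨hT.le, le_rfl⟩]
  have h1 : T - T * k ≤ T - t * k := by nlinarith [mul_le_mul_of_nonneg_right ht.2 hk0]
  linarith [Real.log_le_log (vk_den_pos hT hk1 ⟨hT.le, le_rfl⟩) h1]

lemma admiss_vk {d : ℕ} {T k : ℝ} {y : ℝ → E d} (hT : 0 < T) (hk0 : 0 < k) (hk1 : k < 1)
    (hy : L2fun T y) : Admiss T y (vk T k) := by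
  have hpos : ∀ t ∈ Icc (0 : ℝ) T, 0 < vk T k t := fun t ht =>
    div_pos hk0 (vk_den_pos hT hk1 ht)
  refine ⟨hy.1, hy.2, by unfold vk; fun_prop, hpos, integrableOn_vk hT hk1, ?_⟩
  have hc : ContinuousOn (fun t => max (-Real.log (vk T k t)) 0) (Icc 0 T) :=
    (((continuousOn_vk hT hk1).log fun t ht => (hpos t ht).ne').fun_neg).sup continuousOn_const
  exact hc.integrableOn_Icc.mono_set Ioc_subset_Icc_self

/-- Theorem 4.3 of the paper. -/
theorem stmt3 {d : ℕ} (hd : 1 ≤ d) {T : ℝ} (hT : 0 < T)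
    (θ : ℝ → E d) (hθm : Measurable θ)
    (hθ2 : IntegrableOn (fun t => ‖θ t‖ ^ 2) (Set.Ioc 0 T))
    {a qa : ℝ} (ha0 : 0 < a) (ha2 : a < 1 / 2) (hqneg : qa < 0)
    (hquant : (∫ s in Set.Iic qa, Real.exp (-s ^ 2 / 2)) = a * Real.sqrt (2 * π))
    (r : ℝ → ℝ) (hr : IntegrableOn r (Set.Ioc 0 T)) {x : ℝ} (hx : 0 < x)
    (hθpos : 0 < nrm θ T)
    {z : ℝ} (hz0 : 0 < z)
    (hz1 : z < 1 - Real.exp (-(|qa| * nrm θ T) + nrm θ T ^ 2 / 2))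
    (hqbig : 2 * (T + 1) * nrm θ T ≤ |qa|)
    (Finv : ℝ → ℝ)
    (hFinv : ∀ b : ℝ, 0 ≤ b → b ≤ -Real.log (1 - z) →
      Finv b ∈ Set.Icc 0 (lamMax T θ qa) ∧ Phi T θ qa (Finv b) = b)
    {γ : ℝ} (hγmem : γ ∈ Set.Ioc 0 z)
    (hγmax : ∀ k ∈ Set.Ioc (0:ℝ) z, Gam T θ qa z Finv k ≤ Gam T θ qa z Finv γ) :
    Admiss T (ystarV T θ qa z Finv γ) (vk T γ) ∧
    VaROK T θ (ystarV T θ qa z Finv γ) (vk T γ) qa z ∧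
    Jcost T x r θ (ystarV T θ qa z Finv γ) (vk T γ) = Aconst T x r + Gam T θ qa z Finv γ ∧
    ∀ (y : ℝ → E d) (v : ℝ → ℝ), Admiss T y v → VaROK T θ y v qa z →
      Jcost T x r θ y v ≤ Aconst T x r + Gam T θ qa z Finv γ := by
  have hθ : L2fun T θ := ⟨hθm, hθ2⟩
  have hz : z < 1 := hz1.trans (by linarith [Real.exp_pos (-(|qa| * nrm θ T) + nrm θ T ^ 2 / 2)])
  have hq : nrm θ T < |qa| := by nlinarith
  have hbudget : ∀ k ∈ Ioc (0 : ℝ) z, Real.log ((1 - k) / (1 - z))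
        = Real.log (1 - k) - Real.log (1 - z) ∧
      0 ≤ Finv (Real.log ((1 - k) / (1 - z))) ∧
      Phi T θ qa (Finv (Real.log ((1 - k) / (1 - z)))) = Real.log ((1 - k) / (1 - z)) := by
    intro k hk
    have hlog : Real.log ((1 - k) / (1 - z)) = Real.log (1 - k) - Real.log (1 - z) :=
      Real.log_div (by linarith [hk.2]) (by linarith)
    have h1 : Real.log (1 - z) ≤ Real.log (1 - k) :=
      Real.log_le_log (by linarith) (by linarith [hk.2])
    have h2 : Real.log (1 - k) ≤ 0 :=
      Real.log_nonpos (by linarith [hk.2]) (by linarith [hk.1])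
    have h := hFinv (Real.log ((1 - k) / (1 - z))) (by linarith) (by linarith)
    exact ⟨hlog, h.1.1, h.2⟩
  have hγ1 : γ < 1 := hγmem.2.trans_lt hz
  obtain ⟨hlogγ, hlamγ, hPhiγ⟩ := hbudget γ hγmem
  have hystar : L2fun T (ystarV T θ qa z Finv γ) := L2fun_tau_smul hθ hlamγ
  refine ⟨admiss_vk hT hγmem.1 hγ1 hystar, ?_, ?_, ?_⟩
  · intro t ht
    have h1 := VaR_tau_smul_le hT hθ hθpos hqbig hlamγ ht
    have h2 := Vtot_vk_le hT hγmem.1.le hγ1 ht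
    rw [hPhiγ, hlogγ] at h1
    unfold ystarV
    rw [hlogγ]
    linarith
  · rw [Jcost, setIntegral_om_mul_add hθ hystar hr, setIntegral_log_vk hT hγmem.1 hγ1,
      Vtot_vk_end hT hγ1, Aconst, Gam]
    have : ∫ t in Ioc (0 : ℝ) T, om T t * (⟪ystarV T θ qa z Finv γ t, θ t⟫
          - ‖ystarV T θ qa z Finv γ t‖ ^ 2 / 2)
        = ∫ t in Ioc (0 : ℝ) T, om T t * ‖θ t‖ ^ 2 *
          (tau T θ qa (Finv (Real.log ((1 - γ) / (1 - z)))) t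
            - tau T θ qa (Finv (Real.log ((1 - γ) / (1 - z)))) t ^ 2 / 2) := by
      congr 1
      ext t
      simp only [ystarV, real_inner_smul_left, real_inner_self_eq_norm_sq, norm_smul, mul_pow,
        Real.norm_eq_abs, sq_abs]
      ring
    rw [this]
    ring
  · rintro y v ⟨hym, hy2, hvm, hvpos, hv, hvneg⟩ hVaR
    have hy : L2fun T y := ⟨hym, hy2⟩
    have hVaRT := hVaR T ⟨hT.le, le_rfl⟩
    have hcs := ipr_le_nrm_mul_nrm hy hθ
    have hVpos : 0 < Vtot v T := by
      rw [Vtot, ← intervalIntegral.integral_of_le hT.le]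
      exact intervalIntegral.intervalIntegral_pos_of_pos_on
        ((intervalIntegrable_iff_integrableOn_Ioc_of_le hT.le).2 hv)
        (fun t ht => hvpos t (Ioo_subset_Icc_self ht)) hT
    have hVle : Vtot v T ≤ -Real.log (1 - z) := by
      nlinarith [mul_nonneg (nrm_nonneg y T) (sub_nonneg.2 hq.le), sq_nonneg (nrm y T)]
    set k := 1 - Real.exp (-Vtot v T) with hk
    have hkV : Vtot v T = -Real.log (1 - k) := by simp [hk]
    have hkmem : k ∈ Ioc 0 z := by
      have h1 : Real.exp (-Vtot v T) < 1 := Real.exp_lt_one_iff.2 (by linarith)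
      have h2 : 1 - z ≤ Real.exp (-Vtot v T) :=
        (Real.log_le_iff_le_exp (by linarith)).1 (by linarith)
      exact ⟨by linarith, by linarith⟩
    obtain ⟨hlogk, hlamk, hPhik⟩ := hbudget k hkmem
    have hinv := investment_le hθ hy hθpos hq hlamk hPhik (by rw [hlogk]; linarith)
    have hcons := consumption_le hT hkmem.1 (hkmem.2.trans_lt hz) hvm hvpos hv hvneg hkV
    refine le_trans ?_ (add_le_add_right (hγmax k hkmem) _)
    rw [Jcost, setIntegral_om_mul_add hθ hy hr, Aconst, Gam]
    linarith
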